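/- arXiv:2303.13304 — 2 statements merged into one kernel-verified Lean document; each statement's English description precedes it below -/
import Mathlib

section
/- Two generalized Pauli matrices X^s Z^t and X^{s'} Z^{t'} on ℂ^d are UC-equivalent (i.e. there exists a unitary matrix W with W (X^s Z^t) W† ≈ X^{s'} Z^{t'}) if and only if gcd(s, t, d) = gcd(s', t', d). -/
open Matrix

/-- The primitive `d`-th root of unity `ω = e^{2πi/d}`. -/
noncomputable def omega (d : ℕ) : ℂ := Complex.exp (2 * Real.pi * Complex.I / d)

/-- The power `X^s` (for any integer `s`) of the shift matrix `X` on `ℂ^d`,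
`X|j⟩ = |j+1 mod d⟩`; its `(i,j)` entry is `1` iff `i ≡ j + s (mod d)`. -/
def Xpow (d : ℕ) (s : ℤ) : Matrix (Fin d) (Fin d) ℂ :=
  Matrix.of fun i j => if (i : ℤ) = (((j : ℕ) : ℤ) + s) % (d : ℤ) then (1 : ℂ) else 0

/-- The power `Z^t` (for any integer `t`) of the clock matrix `Z` on `ℂ^d`,
`Z|j⟩ = ω^j |j⟩`; it is diagonal with entries `ω^{t·j} = e^{2πi·t·j/d}`. -/
noncomputable def Zpow (d : ℕ) (t : ℤ) : Matrix (Fin d) (Fin d) ℂ :=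
  Matrix.diagonal fun j => Complex.exp (2 * Real.pi * Complex.I * (t : ℂ) * ((j : ℕ) : ℂ) / (d : ℂ))

/-- The generalized Pauli matrix `X^s Z^t` on `ℂ^d`. -/
noncomputable def GPM (d : ℕ) (s t : ℤ) : Matrix (Fin d) (Fin d) ℂ :=
  Xpow d s * Zpow d t

/-- `A ≈ B` : equality up to a unimodular (global phase) scalar. -/
def PhaseEq {n : Type*} (A B : Matrix n n ℂ) : Prop :=
  ∃ c : ℂ, ‖c‖ = 1 ∧ A = c • B

/-!
Indexing by `ZMod d` turns `X^s Z^t` into the Weyl matrix `W(s, t)` of the standard additive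
character `ψ`. Conjugation by the discrete Fourier transform sends `W(a, b)` to `W(-b, a)`, and
conjugation by a diagonal matrix whose entries form a quadratic function with polarisation `ψ(xy)`
sends it to `W(a, b + a)`, both up to phase. These moves implement the Euclidean algorithm on
`(s, t)`, and `s = 0` may be replaced by `s = d`, so `W(s, t)` is equivalent to `W(0, g)` with
`g = gcd(s, t, d)`. The least `k` for which `W(0, g)^k` is scalar is an invariant; it is the
additive order `d / g` of `g`, which determines `g`.
-/

/-- Unitary conjugacy of complex matrices up to a global phase: UC-equivalence for matrices that
need not be generalized Pauli matrices. -/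
def UCEquiv {n : Type*} [Fintype n] [DecidableEq n] (A B : Matrix n n ℂ) : Prop :=
  ∃ W ∈ Matrix.unitaryGroup n ℂ, PhaseEq (W * A * Wᴴ) B

namespace UCEquiv

variable {m n : Type*} [Fintype m] [DecidableEq m] [Fintype n] [DecidableEq n]
  {A B C W : Matrix n n ℂ} {c : ℂ}

theorem of_intertwine (hW : W ∈ Matrix.unitaryGroup n ℂ) (hc : ‖c‖ = 1)
    (h : W * A = c • (B * W)) : UCEquiv A B := by
  refine ⟨W, hW, c, hc, ?_⟩
  have hWW : W * Wᴴ = 1 := Matrix.mem_unitaryGroup_iff.1 hW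
  rw [h, Matrix.smul_mul, Matrix.mul_assoc, hWW, Matrix.mul_one]

theorem exists_intertwine (h : UCEquiv A B) :
    ∃ W ∈ Matrix.unitaryGroup n ℂ, ∃ c : ℂ, ‖c‖ = 1 ∧ W * A = c • (B * W) := by
  obtain ⟨W, hW, c, hc, h⟩ := h
  have hWW : Wᴴ * W = 1 := Matrix.mem_unitaryGroup_iff'.1 hW
  refine ⟨W, hW, c, hc, ?_⟩
  rw [← Matrix.smul_mul, ← h, Matrix.mul_assoc, hWW, Matrix.mul_one]

theorem refl (A : Matrix n n ℂ) : UCEquiv A A :=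
  of_intertwine (one_mem _) norm_one (by simp)

theorem symm (h : UCEquiv A B) : UCEquiv B A := by
  obtain ⟨W, hW, c, hc, h⟩ := h
  have hc₀ : c ≠ 0 := norm_ne_zero_iff.1 (by simp [hc])
  refine of_intertwine (W := Wᴴ) (c := c⁻¹) (Unitary.star_mem hW) (by simp [hc]) ?_
  have hWW : Wᴴ * W = 1 := Matrix.mem_unitaryGroup_iff'.1 hW
  calc Wᴴ * B = c⁻¹ • (Wᴴ * (c • B)) := by rw [Matrix.mul_smul, inv_smul_smul₀ hc₀]
    _ = c⁻¹ • (Wᴴ * W * A * Wᴴ) := by rw [← h]; simp only [Matrix.mul_assoc]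
    _ = c⁻¹ • (A * Wᴴ) := by rw [hWW, Matrix.one_mul]

theorem trans (hAB : UCEquiv A B) (hBC : UCEquiv B C) : UCEquiv A C := by
  obtain ⟨W, hW, c, hc, hA⟩ := hAB.exists_intertwine
  obtain ⟨V, hV, b, hb, hB⟩ := hBC.exists_intertwine
  refine of_intertwine (mul_mem hV hW) (c := c * b) (by simp [hc, hb]) ?_
  rw [Matrix.mul_assoc, hA, Matrix.mul_smul, ← Matrix.mul_assoc, hB, Matrix.smul_mul, smul_smul,
    Matrix.mul_assoc]

theorem pow (h : UCEquiv A B) (k : ℕ) : UCEquiv (A ^ k) (B ^ k) := by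
  obtain ⟨W, hW, c, hc, h⟩ := h.exists_intertwine
  refine of_intertwine hW (c := c ^ k) (by simp [hc]) ?_
  have hsemiconj : SemiconjBy W A (c • B) := by rw [SemiconjBy, h, Matrix.smul_mul]
  rw [(hsemiconj.pow_right k).eq, smul_pow, Matrix.smul_mul]

theorem exists_eq_smul_one (h : UCEquiv A B) (hA : ∃ a : ℂ, A = a • 1) :
    ∃ b : ℂ, B = b • 1 := by
  obtain ⟨a, rfl⟩ := hA
  obtain ⟨V, hV, c, -, hVB⟩ := h.symm.exists_intertwine
  have hVV : Vᴴ * V = 1 := Matrix.mem_unitaryGroup_iff'.1 hV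
  refine ⟨c * a, ?_⟩
  calc B = Vᴴ * (V * B) := by rw [← Matrix.mul_assoc, hVV, Matrix.one_mul]
    _ = (c * a) • (Vᴴ * V) := by
      rw [hVB, Matrix.smul_mul, Matrix.one_mul, smul_smul, Matrix.mul_smul]
    _ = (c * a) • 1 := by rw [hVV]

theorem submatrix (h : UCEquiv A B) (e : m ≃ n) :
    UCEquiv (A.submatrix e e) (B.submatrix e e) := by
  obtain ⟨W, hW, c, hc, h⟩ := h.exists_intertwine
  refine of_intertwine (W := W.submatrix e e) ?_ hc ?_
  · rw [Matrix.mem_unitaryGroup_iff, Matrix.star_eq_conjTranspose, Matrix.conjTranspose_submatrix,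
      Matrix.submatrix_mul_equiv, ← Matrix.star_eq_conjTranspose,
      Matrix.mem_unitaryGroup_iff.1 hW, Matrix.submatrix_one_equiv]
  · rw [Matrix.submatrix_mul_equiv, Matrix.submatrix_mul_equiv, h, Matrix.submatrix_smul]
    rfl

theorem submatrix_iff (e : m ≃ n) :
    UCEquiv (A.submatrix e e) (B.submatrix e e) ↔ UCEquiv A B :=
  ⟨fun h => by simpa using h.submatrix e.symm, fun h => h.submatrix e⟩

end UCEquiv

theorem diagonal_circle_mem_unitaryGroup {n : Type*} [Fintype n] [DecidableEq n] (u : n → Circle) :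
    Matrix.diagonal (fun i => (u i : ℂ)) ∈ Matrix.unitaryGroup n ℂ := by
  rw [Matrix.mem_unitaryGroup_iff, Matrix.star_eq_conjTranspose, Matrix.diagonal_conjTranspose,
    Matrix.diagonal_mul_diagonal, ← Matrix.diagonal_one]
  congr 1
  ext i
  simp [Complex.mul_conj]

section Weyl

variable {R : Type*} [CommRing R] [DecidableEq R] {ψ : AddChar R ℂ}

/-- The Weyl matrix `W(a, b)` of an additive character `ψ` of a ring: translation by `a` after
multiplication by the character `x ↦ ψ (b * x)`. For `ZMod d` and its standard character this is
the generalized Pauli matrix `X^a Z^b`. -/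
def weylMatrix (ψ : AddChar R ℂ) (a b : R) : Matrix R R ℂ :=
  Matrix.of fun i j => if i = j + a then ψ (b * j) else 0

theorem weylMatrix_zero_left (b : R) :
    weylMatrix ψ 0 b = Matrix.diagonal fun i => ψ (b * i) := by
  ext i j
  rcases eq_or_ne i j with rfl | hij <;> simp [weylMatrix, *]

theorem weylMatrix_zero_left_eq_smul_one_iff (hψ : ψ.IsPrimitive) {b : R} :
    (∃ c : ℂ, weylMatrix ψ 0 b = c • 1) ↔ b = 0 := by
  rw [weylMatrix_zero_left]
  constructor
  · rintro ⟨c, hc⟩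
    have hconst (i : R) : ψ (b * i) = c := by simpa using congrFun₂ hc i i
    by_contra hb
    refine hψ hb (DFunLike.ext _ _ fun i => ?_)
    rw [AddChar.mulShift_apply, AddChar.one_apply, hconst, ← hconst 0, mul_zero,
      AddChar.map_zero_eq_one]
  · rintro rfl
    exact ⟨1, by simp⟩

variable [Fintype R]

theorem mul_weylMatrix_apply (M : Matrix R R ℂ) (a b i j : R) :
    (M * weylMatrix ψ a b) i j = M i (j + a) * ψ (b * j) := by
  simp [Matrix.mul_apply, weylMatrix]

theorem weylMatrix_mul_apply (M : Matrix R R ℂ) (a b i j : R) :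
    (weylMatrix ψ a b * M) i j = ψ (b * (i - a)) * M (i - a) j := by
  simp [Matrix.mul_apply, weylMatrix, ← sub_eq_iff_eq_add]

theorem weylMatrix_zero_left_pow (b : R) (k : ℕ) :
    weylMatrix ψ 0 b ^ k = weylMatrix ψ 0 (k • b) := by
  simp only [weylMatrix_zero_left, Matrix.diagonal_pow, Pi.pow_def, smul_mul_assoc,
    AddChar.map_nsmul_eq_pow]

theorem addOrderOf_dvd_of_ucEquiv_weylMatrix (hψ : ψ.IsPrimitive) {b b' : R}
    (h : UCEquiv (weylMatrix ψ 0 b) (weylMatrix ψ 0 b')) : addOrderOf b' ∣ addOrderOf b := by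
  have hpow := h.pow (addOrderOf b)
  rw [weylMatrix_zero_left_pow, weylMatrix_zero_left_pow] at hpow
  rw [addOrderOf_dvd_iff_nsmul_eq_zero, ← weylMatrix_zero_left_eq_smul_one_iff hψ]
  exact hpow.exists_eq_smul_one
    ((weylMatrix_zero_left_eq_smul_one_iff hψ).2 (addOrderOf_nsmul_eq_zero b))

/-- The discrete Fourier transform of a finite ring with respect to the additive character `ψ`,
normalised so as to be unitary when `ψ` is primitive. -/
noncomputable def fourierMatrix (ψ : AddChar R ℂ) : Matrix R R ℂ :=
  Matrix.of fun i j => (√(Fintype.card R : ℝ) : ℂ)⁻¹ * ψ (i * j)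

theorem fourierMatrix_mem_unitaryGroup (hψ : ψ.IsPrimitive) :
    fourierMatrix ψ ∈ Matrix.unitaryGroup R ℂ := by
  have hcard : (Fintype.card R : ℂ) ≠ 0 := by simp
  have hsqrt : (√(Fintype.card R : ℝ) : ℂ) * √(Fintype.card R : ℝ) = Fintype.card R := by
    rw [← Complex.ofReal_mul, Real.mul_self_sqrt (Nat.cast_nonneg _), Complex.ofReal_natCast]
  rw [Matrix.mem_unitaryGroup_iff]
  ext i j
  have hterm (k : R) : fourierMatrix ψ i k * star (fourierMatrix ψ) k j =
      (Fintype.card R : ℂ)⁻¹ * ψ (k * (i - j)) := by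
    rw [Matrix.star_apply, fourierMatrix, Matrix.of_apply, Matrix.of_apply, ← hsqrt, star_mul',
      ← starRingEnd_apply, ← starRingEnd_apply, map_inv₀, Complex.conj_ofReal,
      ← AddChar.map_neg_eq_conj, mul_mul_mul_comm, ← mul_inv, ← AddChar.map_add_eq_mul]
    ring_nf
  rw [Matrix.mul_apply, Finset.sum_congr rfl fun k _ => hterm k, ← Finset.mul_sum,
    AddChar.sum_mulShift _ hψ, Matrix.one_apply]
  simp only [sub_eq_zero, mul_ite, inv_mul_cancel₀ hcard, mul_zero, Nat.cast_ite, Nat.cast_zero]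

theorem ucEquiv_weylMatrix_neg_swap (hψ : ψ.IsPrimitive) (a b : R) :
    UCEquiv (weylMatrix ψ a b) (weylMatrix ψ (-b) a) := by
  refine .of_intertwine (fourierMatrix_mem_unitaryGroup hψ) (ψ.norm_apply (-(a * b))) ?_
  ext i j
  rw [mul_weylMatrix_apply, Matrix.smul_apply, weylMatrix_mul_apply, smul_eq_mul, fourierMatrix,
    Matrix.of_apply, Matrix.of_apply, mul_assoc, mul_left_comm (ψ _) (_⁻¹),
    mul_left_comm (ψ _) (_⁻¹)]
  simp only [← AddChar.map_add_eq_mul]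
  ring_nf

/-- `q` is a quadratic function with polarisation `(x, y) ↦ ψ (x * y)`, a character of second
degree in the sense of Weil. Such a `q` stands in for `x ↦ ψ (x ^ 2 / 2)` when `2` is not
invertible. -/
def IsSecondDegreeChar (ψ : AddChar R ℂ) (q : R → Circle) : Prop :=
  ∀ x y, (q (x + y) : ℂ) = q x * q y * ψ (x * y)

variable {q : R → Circle}

theorem ucEquiv_weylMatrix_add_zsmul_right (hq : IsSecondDegreeChar ψ q) (k : ℤ) (a b : R) :
    UCEquiv (weylMatrix ψ a b) (weylMatrix ψ a (b + k • a)) := by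
  refine .of_intertwine (diagonal_circle_mem_unitaryGroup fun i => q i ^ k)
    (Circle.norm_coe (q a ^ k)) ?_
  ext i j
  rw [Matrix.smul_apply, Matrix.diagonal_mul, Matrix.mul_diagonal, smul_eq_mul, weylMatrix,
    weylMatrix, Matrix.of_apply, Matrix.of_apply]
  split_ifs with h
  · rw [h, Circle.coe_zpow, hq, mul_zpow, mul_zpow, ← AddChar.map_zsmul_eq_zpow, add_mul,
      AddChar.map_add_eq_mul, smul_mul_assoc, mul_comm a j, Circle.coe_zpow, Circle.coe_zpow]
    ring
  · simp

theorem ucEquiv_weylMatrix_add_zsmul_left (hψ : ψ.IsPrimitive) (hq : IsSecondDegreeChar ψ q)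
    (k : ℤ) (a b : R) : UCEquiv (weylMatrix ψ a b) (weylMatrix ψ (a + k • b) b) := by
  have hshear := ucEquiv_weylMatrix_add_zsmul_right hq (-k) (-b) a
  rw [neg_smul_neg] at hshear
  exact (ucEquiv_weylMatrix_neg_swap hψ a b).trans
    (hshear.trans (ucEquiv_weylMatrix_neg_swap hψ _ b).symm)

theorem ucEquiv_weylMatrix_neg_neg (hψ : ψ.IsPrimitive) (a b : R) :
    UCEquiv (weylMatrix ψ a b) (weylMatrix ψ (-a) (-b)) :=
  (ucEquiv_weylMatrix_neg_swap hψ a b).trans (ucEquiv_weylMatrix_neg_swap hψ (-b) a)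

theorem ucEquiv_weylMatrix_zero_natAbs (hψ : ψ.IsPrimitive) (t : ℤ) :
    UCEquiv (weylMatrix ψ 0 (t : R)) (weylMatrix ψ 0 (t.natAbs : R)) := by
  rcases Int.natAbs_eq t with ht | ht
  · rw [← Int.cast_natCast t.natAbs, ← ht]
    exact .refl _
  · have hneg := ucEquiv_weylMatrix_neg_neg hψ 0 (t : R)
    rwa [neg_zero, ← Int.cast_neg, neg_eq_iff_eq_neg.2 ht, Int.cast_natCast] at hneg

theorem ucEquiv_weylMatrix_zero_gcd (hψ : ψ.IsPrimitive) (hq : IsSecondDegreeChar ψ q) (s t : ℤ) :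
    UCEquiv (weylMatrix ψ s t) (weylMatrix ψ 0 (Int.gcd s t : R)) := by
  -- A shear keeps the order of the two entries, so the induction treats both orders at once.
  suffices UCEquiv (weylMatrix ψ s t) (weylMatrix ψ 0 (Int.gcd s t : R)) ∧
      UCEquiv (weylMatrix ψ t s) (weylMatrix ψ 0 (Int.gcd s t : R)) from this.1
  induction s, t using EuclideanDomain.GCD.induction with
  | H0 t =>
    have hswap := ucEquiv_weylMatrix_neg_swap hψ (t : R) 0
    rw [neg_zero] at hswap
    rw [Int.gcd_zero_left, Int.cast_zero]
    have habs := ucEquiv_weylMatrix_zero_natAbs hψ t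
    exact ⟨habs, hswap.trans habs⟩
  | H1 s t _ ih =>
    have hmod : ((t % s : ℤ) : R) = t + (-(t / s)) • (s : R) := by
      rw [Int.emod_def]
      push_cast [zsmul_eq_mul]
      ring
    rw [Int.gcd_emod, Int.gcd_comm t s, hmod] at ih
    exact ⟨(ucEquiv_weylMatrix_add_zsmul_right hq _ _ _).trans ih.2,
      (ucEquiv_weylMatrix_add_zsmul_left hψ hq _ _ _).trans ih.1⟩

end Weyl

section ZModWeyl

variable {d : ℕ} [NeZero d]

/-- The quadratic function `x ↦ e^{πi x(x + d)/d}` on `ZMod d`. The shift by `d` makes it periodic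
also when `d` is odd. -/
noncomputable def chirp (d : ℕ) [NeZero d] (x : ZMod d) : Circle :=
  ZMod.toCircle ((x.val * (x.val + d) : ℤ) : ZMod (2 * d))

theorem chirp_intCast (m : ℤ) :
    chirp d m = ZMod.toCircle ((m * (m + d) : ℤ) : ZMod (2 * d)) := by
  rw [chirp, ZMod.val_intCast]
  congr 1
  rw [ZMod.intCast_eq_intCast_iff_dvd_sub]
  obtain ⟨r, hr⟩ := (Int.even_mul_succ_self (m / d)).two_dvd
  refine ⟨m % d * (m / d) + d * r, ?_⟩
  have hm := Int.emod_add_mul_ediv m d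
  generalize m % d = v at *
  generalize m / d = w at *
  subst hm
  push_cast
  linear_combination (d : ℤ) ^ 2 * hr

theorem toCircle_two_mul (m : ℤ) :
    ZMod.toCircle ((2 * m : ℤ) : ZMod (2 * d)) = ZMod.toCircle (m : ZMod d) := by
  ext
  rw [ZMod.toCircle_intCast, ZMod.toCircle_intCast]
  push_cast
  rw [mul_left_comm, mul_div_mul_left _ _ two_ne_zero]

theorem isSecondDegreeChar_chirp : IsSecondDegreeChar ZMod.stdAddChar (chirp d) := by
  intro x y
  obtain ⟨m, rfl⟩ := ZMod.intCast_surjective x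
  obtain ⟨n, rfl⟩ := ZMod.intCast_surjective y
  rw [ZMod.stdAddChar_apply, ← Int.cast_add, ← Int.cast_mul, ← toCircle_two_mul, chirp_intCast,
    chirp_intCast, chirp_intCast, ← Circle.coe_mul, ← Circle.coe_mul, ← AddChar.map_add_eq_mul,
    ← AddChar.map_add_eq_mul]
  congr 2
  push_cast
  ring

theorem ucEquiv_weylMatrix_stdAddChar_zero_gcd (s t : ℤ) :
    UCEquiv (weylMatrix ZMod.stdAddChar (s : ZMod d) t)
      (weylMatrix ZMod.stdAddChar 0 (Int.gcd s (Int.gcd t d) : ZMod d)) := by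
  have hgcd (a b : ℤ) : UCEquiv (weylMatrix ZMod.stdAddChar (a : ZMod d) b) _ :=
    ucEquiv_weylMatrix_zero_gcd (ZMod.isPrimitive_stdAddChar d) isSecondDegreeChar_chirp a b
  have hst := hgcd s t
  have hd := hgcd d (Int.gcd s t)
  rw [Int.cast_natCast, ZMod.natCast_self, Int.cast_natCast, Int.gcd_comm d, Int.gcd_assoc] at hd
  exact hst.trans hd

theorem ucEquiv_weylMatrix_zero_natCast_iff {g g' : ℕ} (hg : g ∣ d) (hg' : g' ∣ d) :
    UCEquiv (weylMatrix ZMod.stdAddChar 0 (g : ZMod d))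
      (weylMatrix ZMod.stdAddChar 0 (g' : ZMod d)) ↔ g = g' := by
  refine ⟨fun h => ?_, fun h => h ▸ .refl _⟩
  have hψ := ZMod.isPrimitive_stdAddChar d
  have horder : addOrderOf (g : ZMod d) = addOrderOf (g' : ZMod d) :=
    Nat.dvd_antisymm (addOrderOf_dvd_of_ucEquiv_weylMatrix hψ h.symm)
      (addOrderOf_dvd_of_ucEquiv_weylMatrix hψ h)
  have hd := NeZero.ne d
  rw [ZMod.addOrderOf_coe g hd, ZMod.addOrderOf_coe g' hd, Nat.gcd_eq_right hg,
    Nat.gcd_eq_right hg'] at horder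
  rw [← Nat.div_div_self hg hd, horder, Nat.div_div_self hg' hd]

theorem zmodFinEquiv_apply (i : Fin d) : ZMod.finEquiv d i = ((i : ℕ) : ZMod d) := by
  cases d with
  | zero => exact i.elim0
  | succ n => exact (ZMod.natCast_zmod_val (n := n + 1) i).symm

theorem gpm_eq_submatrix_weylMatrix (s t : ℤ) :
    GPM d s t = (weylMatrix ZMod.stdAddChar (s : ZMod d) (t : ZMod d)).submatrix
      (ZMod.finEquiv d).toEquiv (ZMod.finEquiv d).toEquiv := by
  ext i j
  have hshift : ((i : ℕ) : ℤ) = ((j : ℕ) + s) % d ↔ ((i : ℕ) : ZMod d) = (j : ℕ) + s := by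
    have hi : ((i : ℕ) : ℤ) % d = (i : ℕ) := by exact_mod_cast Nat.mod_eq_of_lt i.isLt
    rw [← hi, ← ZMod.intCast_eq_intCast_iff']
    push_cast
    rfl
  have hclock : ZMod.stdAddChar ((t : ZMod d) * ((j : ℕ) : ZMod d)) =
      Complex.exp (2 * Real.pi * Complex.I * t * (j : ℕ) / d) := by
    rw [← Int.cast_natCast (R := ZMod d), ← Int.cast_mul, ZMod.stdAddChar_coe]
    push_cast
    ring_nf
  simp only [GPM, Xpow, Zpow, Matrix.mul_diagonal, Matrix.of_apply, Matrix.submatrix_apply,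
    weylMatrix, RingEquiv.toEquiv_eq_coe, RingEquiv.coe_toEquiv, zmodFinEquiv_apply, hshift,
    hclock, ite_mul, one_mul, zero_mul]

end ZModWeyl

/-- Two GPMs `X^s Z^t` and `X^{s'} Z^{t'}` on `ℂ^d` are UC-equivalent iff
`gcd(s, t, d) = gcd(s', t', d)`. -/
theorem gpm_uc_equiv_iff_gcd_eq (d : ℕ) (hd : 2 ≤ d) (s t s' t' : ℤ) :
    (∃ W ∈ Matrix.unitaryGroup (Fin d) ℂ,
        PhaseEq (W * GPM d s t * Wᴴ) (GPM d s' t')) ↔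
    Int.gcd s (Int.gcd t (d : ℤ) : ℤ) = Int.gcd s' (Int.gcd t' (d : ℤ) : ℤ) := by
  have : NeZero d := ⟨by omega⟩
  have hdvd (a b : ℤ) : Int.gcd a (Int.gcd b d) ∣ d :=
    (Int.gcd_dvd_natAbs_right a _).trans (Int.gcd_dvd_natAbs_right b d)
  have hst := ucEquiv_weylMatrix_stdAddChar_zero_gcd (d := d) s t
  have hst' := ucEquiv_weylMatrix_stdAddChar_zero_gcd (d := d) s' t'
  change UCEquiv (GPM d s t) (GPM d s' t') ↔ _
  rw [gpm_eq_submatrix_weylMatrix, gpm_eq_submatrix_weylMatrix, UCEquiv.submatrix_iff,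
    ← ucEquiv_weylMatrix_zero_natCast_iff (hdvd s t) (hdvd s' t')]
  exact ⟨fun h => hst.symm.trans (h.trans hst'), fun h => hst.trans (h.trans hst'.symm)⟩
end

section
/- Let a be a positive divisor of d and u an integer with gcd(u, d/a) = 1. Define the map W on the computational basis of ℂ^d by W|i + ja⟩ = |i + uja mod d⟩ for 0 ≤ i ≤ a−1 and 0 ≤ j < d/a. Then W is a well-defined permutation matrix (in particular unitary), W X^a W† = X^{ua}, and if moreover b is a positive divisor of d with u·a·b ≡ a·b (mod d), then W Z^b W† = Z^b. -/
open Matrix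

/-- The permutation map `W` defined on the computational basis of `ℂ^d` by
`W|i + ja⟩ = |i + uja mod d⟩` for `0 ≤ i ≤ a-1`, `0 ≤ j < d/a`: writing a column index
`c = i + ja` with `i = c % a`, `j = c / a`, the `(r, c)` entry is `1` iff
`r ≡ (c % a) + u·(c / a)·a (mod d)`. -/
def Wmap (d a : ℕ) (u : ℤ) : Matrix (Fin d) (Fin d) ℂ :=
  Matrix.of fun r c =>
    if (r : ℤ) = ((((c : ℕ) % a : ℕ) : ℤ) + u * (((c : ℕ) / a : ℕ) : ℤ) * (a : ℤ)) % (d : ℤ)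
    then (1 : ℂ) else 0

/-!
The map `φ_u : i + ja ↦ i + uja` on `ℤ` satisfies `φ_v ∘ φ_u = φ_{vu}` and `φ_1 = id`, and modulo
`d = an` it depends only on `u` modulo `n`. An inverse of `u` modulo `n` therefore gives an inverse
of `φ_u` modulo `d`, so `W` is the matrix of a permutation `σ`, and `W M W† = N` means that
`N (σ p) (σ q) = M p q` for all `p` and `q`. For `M = X^s` with `a ∣ s` this holds because
`φ_u (x + s) = φ_u x + us`, and for `M = Z^t` because `t φ_u x ≡ t x` whenever `uat ≡ at`.
-/

section ScaleQuot

/-- The map `i + ja ↦ i + uja` (for `0 ≤ i < a`) on the integers; reduced modulo `d`, it is the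
index map of `Wmap d a u`. -/
def scaleQuot (a u x : ℤ) : ℤ := x % a + u * (x / a) * a

variable {a n u v s t m x y : ℤ}

theorem scaleQuot_one (a x : ℤ) : scaleQuot a 1 x = x := by
  rw [scaleQuot, one_mul, Int.emod_add_ediv_mul]

theorem scaleQuot_emod (a u x : ℤ) : scaleQuot a u (x % a) = x % a := by
  have hdiv : x % a / a * a = 0 := by
    simpa using Int.emod_add_ediv_mul (x % a) a
  rw [scaleQuot, Int.emod_emod, mul_assoc, hdiv, mul_zero, add_zero]

theorem scaleQuot_add_of_dvd (u x : ℤ) (hs : a ∣ s) :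
    scaleQuot a u (x + s) = scaleQuot a u x + u * s := by
  obtain ⟨k, rfl⟩ := hs
  obtain rfl | ha := eq_or_ne a 0
  · simp
  · rw [scaleQuot, scaleQuot, Int.add_mul_emod_self_left, Int.add_mul_ediv_left x k ha]
    ring

theorem scaleQuot_scaleQuot (a u v x : ℤ) :
    scaleQuot a v (scaleQuot a u x) = scaleQuot a (v * u) x := by
  calc scaleQuot a v (x % a + u * (x / a) * a)
      = x % a + v * (u * (x / a) * a) := by
        rw [scaleQuot_add_of_dvd v _ (dvd_mul_left a _), scaleQuot_emod]
    _ = scaleQuot a (v * u) x := by rw [scaleQuot]; ring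

theorem scaleQuot_modEq_of_modEq_left (x : ℤ) (h : u ≡ v [ZMOD n]) :
    scaleQuot a u x ≡ scaleQuot a v x [ZMOD a * n] := by
  have hmul := ((h.mul_right (x / a)).mul_right' (c := a)).add_left (x % a)
  rwa [mul_comm n a] at hmul

theorem scaleQuot_modEq_of_modEq_right (u : ℤ) (h : x ≡ y [ZMOD a * n]) :
    scaleQuot a u x ≡ scaleQuot a u y [ZMOD a * n] := by
  obtain ⟨k, rfl⟩ := Int.modEq_iff_add_fac.mp h
  rw [scaleQuot_add_of_dvd u x ((dvd_mul_right a n).mul_right k)]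
  exact Int.left_modEq_add_iff.mpr ((dvd_mul_right (a * n) k).mul_left u)

theorem scaleQuot_modEq_iff (hu : IsCoprime u n) :
    scaleQuot a u x ≡ scaleQuot a u y [ZMOD a * n] ↔ x ≡ y [ZMOD a * n] := by
  refine ⟨fun h ↦ ?_, scaleQuot_modEq_of_modEq_right u⟩
  obtain ⟨v, w, hvw⟩ := hu
  have hv : v * u ≡ 1 [ZMOD n] := Int.modEq_iff_dvd.mpr ⟨w, by linear_combination -hvw⟩
  have leftInv (z : ℤ) : scaleQuot a v (scaleQuot a u z) ≡ z [ZMOD a * n] := by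
    simpa only [scaleQuot_scaleQuot, scaleQuot_one] using scaleQuot_modEq_of_modEq_left z hv
  exact (leftInv x).symm.trans ((scaleQuot_modEq_of_modEq_right v h).trans (leftInv y))

theorem mul_scaleQuot_modEq (x : ℤ) (h : u * a * t ≡ a * t [ZMOD m]) :
    t * scaleQuot a u x ≡ t * x [ZMOD m] := by
  calc t * scaleQuot a u x
      = t * (x % a) + u * a * t * (x / a) := by rw [scaleQuot]; ring
    _ ≡ t * (x % a) + a * t * (x / a) [ZMOD m] := (h.mul_right _).add_left _
    _ = t * (x % a + a * (x / a)) := by ring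
    _ = t * x := by rw [Int.emod_add_mul_ediv]

end ScaleQuot

section FinModEq

variable {d : ℕ}

theorem fin_val_modEq_iff {i j : Fin d} : (i : ℤ) ≡ j [ZMOD d] ↔ i = j := by
  rw [Int.natCast_modEq_iff, Fin.ext_iff]
  exact ⟨fun h ↦ h.eq_of_lt_of_lt i.isLt j.isLt, fun h ↦ h ▸ rfl⟩

theorem fin_val_eq_emod_iff {i : Fin d} {x : ℤ} : (i : ℤ) = x % d ↔ (i : ℤ) ≡ x [ZMOD d] := by
  rw [Int.ModEq, Int.emod_eq_of_lt (Int.natCast_nonneg i) (Int.ofNat_lt.mpr i.isLt)]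

theorem exists_perm_val_modEq [NeZero d] {f : ℤ → ℤ}
    (hf : ∀ x y, f x ≡ f y [ZMOD d] → x ≡ y [ZMOD d]) :
    ∃ σ : Equiv.Perm (Fin d), ∀ i, (σ i : ℤ) ≡ f i [ZMOD d] := by
  have exists_rep (x : ℤ) : ∃ r : Fin d, (r : ℤ) ≡ x [ZMOD d] := by
    obtain ⟨r, hr, hrx⟩ := Int.existsUnique_equiv_nat x (Nat.cast_pos.mpr (NeZero.pos d))
    exact ⟨⟨r, Nat.cast_lt.mp hr⟩, hrx⟩
  choose g hg using fun i : Fin d ↦ exists_rep (f i)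
  have g_injective : Function.Injective g := fun i j hij ↦
    fin_val_modEq_iff.mp (hf i j ((hg i).symm.trans (hij ▸ hg j)))
  exact ⟨Equiv.ofBijective g (Finite.injective_iff_bijective.mp g_injective), hg⟩

end FinModEq

section PermMatrix

variable {ι R : Type*} [DecidableEq ι]

theorem permMatrix_inv_apply [Zero R] [One R] (σ : Equiv.Perm ι) (r c : ι) :
    (σ⁻¹).permMatrix R r c = if r = σ c then 1 else 0 := by
  simp [PEquiv.toMatrix_apply, Equiv.symm_apply_eq]

variable [Fintype ι] [NonAssocSemiring R] [StarRing R]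

theorem permMatrix_mul_mul_conjTranspose (σ : Equiv.Perm ι) (M : Matrix ι ι R) :
    σ.permMatrix R * M * (σ.permMatrix R)ᴴ = M.submatrix σ σ := by
  rw [conjTranspose_permMatrix, PEquiv.toMatrix_toPEquiv_mul, PEquiv.mul_toMatrix_toPEquiv]
  rfl

theorem permMatrix_inv_conj_eq_iff {σ : Equiv.Perm ι} {M N : Matrix ι ι R} :
    (σ⁻¹).permMatrix R * M * ((σ⁻¹).permMatrix R)ᴴ = N ↔ M = N.submatrix σ σ := by
  rw [permMatrix_mul_mul_conjTranspose]
  exact (Matrix.reindex σ σ).eq_symm_apply.symm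

theorem permMatrix_mem_unitaryGroup {S : Type*} [CommRing S] [StarRing S] (σ : Equiv.Perm ι) :
    σ.permMatrix S ∈ Matrix.unitaryGroup ι S := by
  rw [Matrix.mem_unitaryGroup_iff, Matrix.star_eq_conjTranspose]
  simpa using permMatrix_mul_mul_conjTranspose σ (1 : Matrix ι ι S)

end PermMatrix

section Pauli

variable {d : ℕ}

theorem Xpow_apply (s : ℤ) (i j : Fin d) :
    Xpow d s i j = if (i : ℤ) ≡ j + s [ZMOD d] then 1 else 0 :=
  if_congr fin_val_eq_emod_iff rfl rfl

theorem Zpow_eq_diagonal_stdAddChar [NeZero d] (t : ℤ) :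
    Zpow d t = Matrix.diagonal fun j : Fin d ↦ ZMod.stdAddChar ((t * j : ℤ) : ZMod d) := by
  simp only [Zpow, ZMod.stdAddChar_coe]
  simp only [Int.cast_mul, Int.cast_natCast, mul_assoc]

theorem Wmap_apply (a : ℕ) (u : ℤ) (r c : Fin d) :
    Wmap d a u r c = if (r : ℤ) ≡ scaleQuot a u c [ZMOD d] then 1 else 0 :=
  if_congr fin_val_eq_emod_iff rfl rfl

variable {a : ℕ} {u : ℤ} {σ : Equiv.Perm (Fin d)}

theorem Wmap_eq_permMatrix (hσ : ∀ c, (σ c : ℤ) ≡ scaleQuot a u c [ZMOD d]) :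
    Wmap d a u = (σ⁻¹).permMatrix ℂ := by
  ext r c
  rw [Wmap_apply, permMatrix_inv_apply]
  refine if_congr ?_ rfl rfl
  rw [← fin_val_modEq_iff]
  exact ⟨fun h ↦ h.trans (hσ c).symm, fun h ↦ h.trans (hσ c)⟩

theorem Xpow_submatrix_perm (hσ : ∀ c, (σ c : ℤ) ≡ scaleQuot a u c [ZMOD d])
    (hinj : ∀ x y, scaleQuot a u x ≡ scaleQuot a u y [ZMOD d] ↔ x ≡ y [ZMOD d])
    {s : ℤ} (hs : (a : ℤ) ∣ s) : (Xpow d (u * s)).submatrix σ σ = Xpow d s := by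
  ext p q
  rw [Matrix.submatrix_apply, Xpow_apply, Xpow_apply]
  refine if_congr ?_ rfl rfl
  have hq : (σ q : ℤ) + u * s ≡ scaleQuot a u (q + s) [ZMOD d] := by
    rw [scaleQuot_add_of_dvd u q hs]
    exact (hσ q).add_right _
  rw [← hinj p]
  exact ⟨fun h ↦ (hσ p).symm.trans (h.trans hq), fun h ↦ (hσ p).trans (h.trans hq.symm)⟩

theorem Zpow_submatrix_perm [NeZero d] (hσ : ∀ c, (σ c : ℤ) ≡ scaleQuot a u c [ZMOD d])
    {t : ℤ} (ht : u * a * t ≡ a * t [ZMOD d]) : (Zpow d t).submatrix σ σ = Zpow d t := by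
  rw [Zpow_eq_diagonal_stdAddChar, Matrix.submatrix_diagonal_equiv]
  congr 1
  ext p
  have hp : t * (σ p : ℤ) ≡ t * p [ZMOD d] :=
    ((hσ p).mul_left t).trans (mul_scaleQuot_modEq p ht)
  exact congrArg ZMod.stdAddChar ((ZMod.intCast_eq_intCast_iff _ _ d).mpr hp)

end Pauli

theorem Wmap_perm_unitary_conj_general {d a : ℕ} [NeZero d] (ha : a ∣ d)
    {u : ℤ} (hu : Int.gcd u ((d / a : ℕ) : ℤ) = 1) :
    (∃ σ : Equiv.Perm (Fin d), ∀ r c : Fin d, Wmap d a u r c = if r = σ c then 1 else 0) ∧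
    Wmap d a u ∈ Matrix.unitaryGroup (Fin d) ℂ ∧
    (∀ s : ℤ, (a : ℤ) ∣ s → Wmap d a u * Xpow d s * (Wmap d a u)ᴴ = Xpow d (u * s)) ∧
    (∀ t : ℤ, u * a * t ≡ (a : ℤ) * t [ZMOD (d : ℤ)] →
      Wmap d a u * Zpow d t * (Wmap d a u)ᴴ = Zpow d t) := by
  have hinj (x y : ℤ) : scaleQuot a u x ≡ scaleQuot a u y [ZMOD d] ↔ x ≡ y [ZMOD d] := by
    have hd : (d : ℤ) = a * (d / a : ℕ) := by exact_mod_cast (Nat.mul_div_cancel' ha).symm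
    rw [hd]
    exact scaleQuot_modEq_iff (Int.isCoprime_iff_gcd_eq_one.mpr hu)
  obtain ⟨σ, hσ⟩ := exists_perm_val_modEq fun x y ↦ (hinj x y).mp
  rw [Wmap_eq_permMatrix hσ]
  exact ⟨⟨σ, permMatrix_inv_apply σ⟩, permMatrix_mem_unitaryGroup σ⁻¹,
    fun s hs ↦ permMatrix_inv_conj_eq_iff.mpr (Xpow_submatrix_perm hσ hinj hs).symm,
    fun t ht ↦ permMatrix_inv_conj_eq_iff.mpr (Zpow_submatrix_perm hσ ht).symm⟩

/-- If `a` is a positive divisor of `d` and `gcd(u, d/a) = 1`, then the map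
`W|i + ja⟩ = |i + uja mod d⟩` is a well-defined permutation matrix (in particular unitary),
`W X^a W† = X^{ua}`, and for any positive divisor `b` of `d` with `u·a·b ≡ a·b (mod d)` one has
`W Z^b W† = Z^b`. -/
theorem Wmap_perm_unitary_conj (d a : ℕ) (hd : 2 ≤ d) (ha0 : 0 < a) (ha : a ∣ d)
    (u : ℤ) (hu : Int.gcd u ((d / a : ℕ) : ℤ) = 1) :
    (∃ σ : Equiv.Perm (Fin d), ∀ r c : Fin d, Wmap d a u r c = if r = σ c then 1 else 0) ∧
    Wmap d a u ∈ Matrix.unitaryGroup (Fin d) ℂ ∧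
    Wmap d a u * Xpow d (a : ℤ) * (Wmap d a u)ᴴ = Xpow d (u * a) ∧
    (∀ b : ℕ, 0 < b → b ∣ d → u * a * b ≡ (a : ℤ) * b [ZMOD (d : ℤ)] →
      Wmap d a u * Zpow d (b : ℤ) * (Wmap d a u)ᴴ = Zpow d (b : ℤ)) := by
  have : NeZero d := ⟨by lia⟩
  obtain ⟨hperm, hunit, hX, hZ⟩ := Wmap_perm_unitary_conj_general ha hu
  exact ⟨hperm, hunit, hX a dvd_rfl, fun b _ _ ↦ hZ b⟩
end
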